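/- arXiv:2104.11378 — 7 statements merged into one kernel-verified Lean document; each statement's English description precedes it below -/
import Mathlib

section
/- For odd N and any real numbers c₁,c₂,c₃, the matrix M = c₁ σ₁^{⊗N} + c₂ σ₂^{⊗N} + c₃ σ₃^{⊗N} satisfies M² = (c₁²+c₂²+c₃²) · 1, where 1 is the 2^N × 2^N identity matrix. -/
/-! The Kronecker power is multiplicative, so products of the matrices `σⱼ^{⊗N}` are computed
factor by factor: `σⱼ² = 1` gives `(σⱼ^{⊗N})² = 1`, and `σᵢσⱼ = -σⱼσᵢ` for `i ≠ j` gives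
`σᵢ^{⊗N} σⱼ^{⊗N} = (-1)^N σⱼ^{⊗N} σᵢ^{⊗N}`. For odd `N` the three matrices therefore anticommute
pairwise, and the cross terms in the expanded square cancel. -/

open Matrix Complex

noncomputable section

/-- The Pauli matrices σ₁, σ₂, σ₃ (indexed by `Fin 3`). -/
def σ : Fin 3 → Matrix (Fin 2) (Fin 2) ℂ
  | 0 => !![0, 1; 1, 0]
  | 1 => !![0, -Complex.I; Complex.I, 0]
  | 2 => !![1, 0; 0, -1]

/-- The N-fold Kronecker power σⱼ^{⊗N}, with entries (σⱼ^{⊗N})_{x,y} = ∏ₜ (σⱼ)_{x t, y t}. -/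
def pauliPow (N : ℕ) (j : Fin 3) : Matrix (Fin N → Fin 2) (Fin N → Fin 2) ℂ :=
  Matrix.of fun x y => ∏ t, σ j (x t) (y t)

theorem σ_mul_self (j : Fin 3) : σ j * σ j = 1 := by
  fin_cases j <;> ext a b <;> fin_cases a <;> fin_cases b <;> simp [σ]

theorem σ_anticomm {i j : Fin 3} (h : i ≠ j) : σ i * σ j = -(σ j * σ i) := by
  fin_cases i <;> fin_cases j <;> first
    | exact absurd rfl h
    | (ext a b; fin_cases a <;> fin_cases b <;> simp [σ])

/-- The Kronecker power is multiplicative: a product of sums over `Fin 2` expands into a sum over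
`Fin N → Fin 2`. -/
theorem pauliPow_mul_apply (N : ℕ) (i j : Fin 3) (x y : Fin N → Fin 2) :
    (pauliPow N i * pauliPow N j) x y = ∏ t, (σ i * σ j) (x t) (y t) := by
  simp only [pauliPow, Matrix.mul_apply, Matrix.of_apply, ← Finset.prod_mul_distrib]
  exact (Fintype.prod_sum fun t k => σ i (x t) k * σ j k (y t)).symm

theorem pauliPow_mul_self (N : ℕ) (j : Fin 3) : pauliPow N j * pauliPow N j = 1 := by
  ext x y
  rw [pauliPow_mul_apply, σ_mul_self]
  simp only [Matrix.one_apply, Finset.prod_ite_zero, funext_iff, Finset.mem_univ, true_imp_iff,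
    Finset.prod_const_one]

theorem pauliPow_anticomm {N : ℕ} (hN : Odd N) {i j : Fin 3} (h : i ≠ j) :
    pauliPow N i * pauliPow N j = -(pauliPow N j * pauliPow N i) := by
  ext x y
  rw [Matrix.neg_apply, pauliPow_mul_apply, pauliPow_mul_apply, σ_anticomm h]
  simp [Finset.prod_neg, hN.neg_one_pow]

theorem pauliPow_combination_sq (N : ℕ) (hN : Odd N) (c₁ c₂ c₃ : ℝ) :
    ((c₁ : ℂ) • pauliPow N 0 + (c₂ : ℂ) • pauliPow N 1 + (c₃ : ℂ) • pauliPow N 2) ^ 2 =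
      ((c₁ ^ 2 + c₂ ^ 2 + c₃ ^ 2 : ℝ) : ℂ) • (1 : Matrix (Fin N → Fin 2) (Fin N → Fin 2) ℂ) := by
  have h01 := pauliPow_anticomm hN (show (0 : Fin 3) ≠ 1 by decide)
  have h02 := pauliPow_anticomm hN (show (0 : Fin 3) ≠ 2 by decide)
  have h12 := pauliPow_anticomm hN (show (1 : Fin 3) ≠ 2 by decide)
  rw [pow_two]
  simp only [add_mul, mul_add, smul_mul_assoc, mul_smul_comm, pauliPow_mul_self,
    h01, h02, h12]
  push_cast
  module
end
end

section
/- For N ≡ 2 (mod 4) and real numbers c₁,c₂,c₃, the characteristic polynomial of the N-qubit state ρ_N = 2^{-N}(1 + ∑_{j=1}^{3} c_j σ_j^{⊗N}) equals [(X − (1−c₁−c₂−c₃)/2^N)(X − (1−c₁+c₂+c₃)/2^N)(X − (1+c₁−c₂+c₃)/2^N)(X − (1+c₁+c₂−c₃)/2^N)]^{2^{N−2}}; that is, the eigenvalues of ρ_N are (1−c₁−c₂−c₃)/2^N, (1−c₁+c₂+c₃)/2^N, (1+c₁−c₂+c₃)/2^N and (1+c₁+c₂−c₃)/2^N, each with multiplicity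 2^{N−2}. -/
/-!
Write `N = n + 2`, identify a bit string with a vector over `ℤ/2`, and let `s(x) = (-1)^{|x|}`.
The matrix `σ₃^{⊗N}` is diagonal with entries `s(x)`, while `σ₁^{⊗N}` and `σ₂^{⊗N}` are supported
on the entries `(x, x̄)`, `x̄ = x + 1` being the complementary string, with values `1` and
`(-i)^N s(x) = -s(x)`. As `N` is even, `s(x) = s(x̄)`, so on each pair `{x, x̄}` the state `ρ_N`
restricts to the `2 × 2` block `2^{-N} !![1 + c₃ s, c₁ - c₂ s; c₁ - c₂ s, 1 + c₃ s]`, whose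
eigenvalues are `2^{-N} (1 + c₃ s ± (c₁ - c₂ s))`.

The equivalence `pairEquiv` parametrizes strings by `(b, a, z)`, where `(a, z)` labels a
complementary pair, `b` selects a member of it and `s = (-1)^a`. Reindexing along it makes `ρ_N`
block diagonal (`rhoN_submatrix`), and each of the `2^n` values of `z` contributes one block with
`s = 1` and one with `s = -1`.
-/

open Matrix Complex Polynomial

noncomputable section

/-- The N-qubit state ρ_N = 2^{-N}(1 + ∑ⱼ cⱼ σⱼ^{⊗N}). -/
def rhoN (N : ℕ) (c₁ c₂ c₃ : ℝ) : Matrix (Fin N → Fin 2) (Fin N → Fin 2) ℂ :=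
  ((2 : ℂ) ^ N)⁻¹ •
    (1 + (c₁ : ℂ) • pauliPow N 0 + (c₂ : ℂ) • pauliPow N 1 + (c₃ : ℂ) • pauliPow N 2)

/-- The character `b ↦ (-1)^b` of `ℤ/2`, with `ℤ/2` encoded as `Fin 2`. -/
def bitSign (b : Fin 2) : ℂ := if b = 0 then 1 else -1

lemma bitSign_add (a b : Fin 2) : bitSign (a + b) = bitSign a * bitSign b := by
  fin_cases a <;> fin_cases b <;> simp [bitSign]

lemma bitSign_mul_self (a : Fin 2) : bitSign a * bitSign a = 1 := by
  fin_cases a <;> simp [bitSign]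

lemma bitSign_sum {n : ℕ} (z : Fin n → Fin 2) : bitSign (∑ i, z i) = ∏ i, bitSign (z i) := by
  induction n with
  | zero => simp [bitSign]
  | succ n ih => rw [Fin.sum_univ_succ, Fin.prod_univ_succ, bitSign_add, ih]

lemma bit_add_add_self (a b : Fin 2) : a + b + b = a := by
  fin_cases a <;> fin_cases b <;> rfl

/-- Coordinates `(b, a, z)` on bit strings of length `n + 2`: `b` is the first bit, `z` is the
string of the last `n` bits after adding `b` to each, and `a` is chosen so that, for even `n`,
the string has parity `a`. Complementing the string only changes `b`. -/
def pairEquiv (n : ℕ) : Fin 2 × (Fin 2 × (Fin n → Fin 2)) ≃ (Fin (n + 2) → Fin 2) where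
  toFun p := Fin.cons p.1 (Fin.cons (p.2.1 + ∑ i, p.2.2 i + p.1) fun i => p.2.2 i + p.1)
  invFun x := (x 0, x 1 + x 0 + ∑ i : Fin n, (x i.succ.succ + x 0), fun i => x i.succ.succ + x 0)
  left_inv := by
    rintro ⟨b, a, z⟩
    have h1 : (Fin.cons b (Fin.cons (a + ∑ i, z i + b) fun i => z i + b) :
        Fin (n + 2) → Fin 2) 1 = a + ∑ i, z i + b := rfl
    simp [h1, bit_add_add_self]
  right_inv := by
    intro x
    funext t
    refine Fin.cases ?_ (fun t => Fin.cases ?_ (fun t => ?_) t) t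
    · rfl
    · simp only [Fin.cons_succ, Fin.cons_zero, bit_add_add_self]
      rfl
    · simp [bit_add_add_self]

lemma pairEquiv_compl (n : ℕ) (b : Fin 2) (k : Fin 2 × (Fin n → Fin 2)) (t : Fin (n + 2)) :
    pairEquiv n (b + 1, k) t = pairEquiv n (b, k) t + 1 := by
  refine Fin.cases ?_ (fun t => Fin.cases ?_ (fun t => ?_) t) t <;>
    simp [pairEquiv, add_assoc]

lemma prod_bitSign_pairEquiv {n : ℕ} (hn : Even n) (b : Fin 2) (k : Fin 2 × (Fin n → Fin 2)) :
    ∏ t, bitSign (pairEquiv n (b, k) t) = bitSign k.1 := by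
  obtain ⟨a, z⟩ := k
  obtain ⟨m, rfl⟩ := hn
  have hz : (∏ i, bitSign (z i)) * ∏ i, bitSign (z i) = 1 := by
    rw [← bitSign_sum, bitSign_mul_self]
  have hb := bitSign_mul_self b
  have hbm : bitSign b ^ (m + m) = 1 := by
    rw [pow_add, ← mul_pow, hb, one_pow]
  simp only [pairEquiv, Equiv.coe_fn_mk, Fin.prod_univ_succ (n := m + m + 1),
    Fin.prod_univ_succ (n := m + m), Fin.cons_zero, Fin.cons_succ, bitSign_add, bitSign_sum,
    Finset.prod_mul_distrib, Finset.prod_const, Finset.card_univ, Fintype.card_fin, hbm]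
  linear_combination (bitSign a * bitSign b * bitSign b) * hz + bitSign a * hb

lemma pauliPow_zero_apply {N : ℕ} (x y : Fin N → Fin 2) :
    pauliPow N 0 x y = if (∀ t, y t = x t + 1) then 1 else 0 := by
  have h (a b : Fin 2) : σ 0 a b = if b = a + 1 then 1 else 0 := by
    fin_cases a <;> fin_cases b <;> simp [σ]
  simp only [pauliPow, Matrix.of_apply, h, Fintype.prod_ite_zero, Finset.prod_const_one]

lemma pauliPow_one_apply {N : ℕ} (x y : Fin N → Fin 2) :
    pauliPow N 1 x y =
      if (∀ t, y t = x t + 1) then (-Complex.I) ^ N * ∏ t, bitSign (x t) else 0 := by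
  have h (a b : Fin 2) : σ 1 a b = if b = a + 1 then -Complex.I * bitSign a else 0 := by
    fin_cases a <;> fin_cases b <;> simp [σ, bitSign]
  simp only [pauliPow, Matrix.of_apply, h, Fintype.prod_ite_zero, Finset.prod_mul_distrib,
    Finset.prod_const, Finset.card_univ, Fintype.card_fin]

lemma pauliPow_two_apply {N : ℕ} (x y : Fin N → Fin 2) :
    pauliPow N 2 x y = if y = x then ∏ t, bitSign (x t) else 0 := by
  have h (a b : Fin 2) : σ 2 a b = if b = a then bitSign a else 0 := by
    fin_cases a <;> fin_cases b <;> simp [σ, bitSign]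
  simp only [pauliPow, Matrix.of_apply, h, Fintype.prod_ite_zero, funext_iff]
  congr

/-- The restriction of `ρ_N` to a pair of complementary strings of sign `s`. -/
def pairBlock (N : ℕ) (c₁ c₂ c₃ : ℝ) (s : ℂ) : Matrix (Fin 2) (Fin 2) ℂ :=
  ((2 : ℂ) ^ N)⁻¹ • !![1 + c₃ * s, c₁ - c₂ * s; c₁ - c₂ * s, 1 + c₃ * s]

lemma rhoN_submatrix {n : ℕ} (hn : n % 4 = 0) (c₁ c₂ c₃ : ℝ) :
    (rhoN (n + 2) c₁ c₂ c₃).submatrix (pairEquiv n) (pairEquiv n) =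
      Matrix.blockDiagonal fun k : Fin 2 × (Fin n → Fin 2) =>
        pairBlock (n + 2) c₁ c₂ c₃ (bitSign k.1) := by
  have hI : (-Complex.I) ^ (n + 2) = -1 := by
    obtain ⟨m, rfl⟩ := Nat.dvd_of_mod_eq_zero hn
    have h4 : (-Complex.I) ^ 4 = 1 := by rw [Even.neg_pow (by decide), Complex.I_pow_four]
    rw [pow_add, pow_mul, h4]
    simp
  have hev : Even n := by rw [Nat.even_iff]; omega
  ext ⟨b, k⟩ ⟨b', k'⟩
  have hcompl : (∀ t, pairEquiv n (b', k') t = pairEquiv n (b, k) t + 1) ↔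
      b' = b + 1 ∧ k = k' := by
    simp only [← pairEquiv_compl, ← funext_iff, (pairEquiv n).injective.eq_iff, Prod.mk.injEq,
      eq_comm (a := k)]
  have hdiag : pairEquiv n (b', k') = pairEquiv n (b, k) ↔ b' = b ∧ k = k' := by
    simp only [(pairEquiv n).injective.eq_iff, Prod.mk.injEq, eq_comm (a := k)]
  simp only [Matrix.submatrix_apply, rhoN, Matrix.smul_apply, Matrix.add_apply, Matrix.one_apply,
    pauliPow_zero_apply, pauliPow_one_apply, pauliPow_two_apply, hcompl,
    eq_comm (a := pairEquiv n (b, k)), hdiag,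
    prod_bitSign_pairEquiv hev, hI, Matrix.blockDiagonal_apply, pairBlock]
  by_cases hk : k = k'
  · fin_cases b <;> fin_cases b' <;> simp [hk] <;> ring
  · simp [hk]

lemma charpoly_blockDiagonal_prod {m o : Type*} [Fintype m] [DecidableEq m] [Fintype o]
    [DecidableEq o] (M : o → Matrix m m ℂ) :
    (Matrix.blockDiagonal M).charpoly = ∏ k, (M k).charpoly := by
  have h : (Matrix.blockDiagonal M).charmatrix =
      Matrix.blockDiagonal fun k => (M k).charmatrix := by
    ext ⟨i, k⟩ ⟨j, k'⟩ : 2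
    by_cases hk : k = k'
    · subst hk
      by_cases hij : i = j <;>
        simp [Matrix.blockDiagonal_apply, hij]
    · simp [Matrix.blockDiagonal_apply, hk]
  rw [Matrix.charpoly, h, Matrix.det_blockDiagonal]
  rfl

lemma charpoly_pairBlock (N : ℕ) (c₁ c₂ c₃ : ℝ) (s : ℂ) :
    (pairBlock N c₁ c₂ c₃ s).charpoly =
      (X - C ((1 + c₃ * s + (c₁ - c₂ * s)) / 2 ^ N)) *
        (X - C ((1 + c₃ * s - (c₁ - c₂ * s)) / 2 ^ N)) := by
  rw [Matrix.charpoly, Matrix.det_fin_two]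
  simp only [pairBlock, Matrix.charmatrix_apply, Matrix.smul_apply, smul_eq_mul, div_eq_mul_inv,
    Matrix.of_apply, Matrix.cons_val', Matrix.cons_val_zero, Matrix.cons_val_one,
    Matrix.cons_val_fin_one, Matrix.diagonal_apply, C_mul, C_add, C_sub]
  simp
  ring

theorem charpoly_rhoN_two_mod_four (N : ℕ) (hN1 : 1 ≤ N) (hN : N % 4 = 2) (c₁ c₂ c₃ : ℝ) :
    (rhoN N c₁ c₂ c₃).charpoly =
      ((X - C (((1 - c₁ - c₂ - c₃) / 2 ^ N : ℝ) : ℂ)) *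
        (X - C (((1 - c₁ + c₂ + c₃) / 2 ^ N : ℝ) : ℂ)) *
        (X - C (((1 + c₁ - c₂ + c₃) / 2 ^ N : ℝ) : ℂ)) *
        (X - C (((1 + c₁ + c₂ - c₃) / 2 ^ N : ℝ) : ℂ))) ^ 2 ^ (N - 2) := by
  obtain ⟨n, rfl⟩ : ∃ n, N = n + 2 := ⟨N - 2, by omega⟩
  have hre := Matrix.charpoly_reindex (pairEquiv n).symm (rhoN (n + 2) c₁ c₂ c₃)
  rw [Matrix.reindex_apply, Equiv.symm_symm, rhoN_submatrix (by omega),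
    charpoly_blockDiagonal_prod] at hre
  rw [← hre, Fintype.prod_prod_type, Fin.prod_univ_two]
  have h0 : bitSign 0 = 1 := by simp [bitSign]
  have h1 : bitSign 1 = -1 := by simp [bitSign]
  simp only [charpoly_pairBlock, Finset.prod_const, Finset.card_univ, Fintype.card_fun,
    Fintype.card_fin, Nat.add_sub_cancel, h0, h1]
  have e₁ : (((1 - c₁ - c₂ - c₃) / 2 ^ (n + 2) : ℝ) : ℂ) =
      (1 + c₃ * (-1) - (c₁ - c₂ * (-1))) / 2 ^ (n + 2) := by push_cast; ring
  have e₂ : (((1 - c₁ + c₂ + c₃) / 2 ^ (n + 2) : ℝ) : ℂ) =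
      (1 + c₃ * 1 - (c₁ - c₂ * 1)) / 2 ^ (n + 2) := by push_cast; ring
  have e₃ : (((1 + c₁ - c₂ + c₃) / 2 ^ (n + 2) : ℝ) : ℂ) =
      (1 + c₃ * 1 + (c₁ - c₂ * 1)) / 2 ^ (n + 2) := by push_cast; ring
  have e₄ : (((1 + c₁ + c₂ - c₃) / 2 ^ (n + 2) : ℝ) : ℂ) =
      (1 + c₃ * (-1) + (c₁ - c₂ * (-1))) / 2 ^ (n + 2) := by push_cast; ring
  rw [e₁, e₂, e₃, e₄, ← mul_pow]
  refine congrArg (· ^ 2 ^ n) ?_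
  ac_rfl
end
end

section
/- Let c₁,c₂,c₃ be real numbers with ξ = √(c₁²+c₂²+c₃²) ≤ 1. The von Neumann entropy of the three-qubit state ρ = (1/8)(1 + ∑_{j=1}^{3} c_j σ_j⊗σ_j⊗σ_j) (an 8×8 Hermitian matrix) equals S(ρ) = 3 − f(ξ) = −4·((1+ξ)/8)·log₂((1+ξ)/8) − 4·((1−ξ)/8)·log₂((1−ξ)/8). -/
/-!
The traceless part `H = ∑ⱼ cⱼ σⱼ⊗σⱼ⊗σⱼ` of `8ρ` satisfies `H² = ξ²`: distinct Pauli matrices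
anticommute, hence so do their threefold tensor powers (an odd number of signs), and each tensor
power squares to `1`. So every eigenvalue of `ρ` is `(1 + ξ)/8` or `(1 - ξ)/8`, while
`tr ρ = 1` says that the deviations `8λᵢ - 1` sum to zero. On a two-point set every function agrees
with an affine one, so the trace alone determines `∑ λᵢ log₂ λᵢ` (`sum_of_two_valued`), and the
multiplicities never have to be computed.
-/


open Matrix Complex Kronecker

noncomputable section

/-- Pauli matrices -/
def σ₁ : Matrix (Fin 2) (Fin 2) ℂ := !![0, 1; 1, 0]
def σ₂ : Matrix (Fin 2) (Fin 2) ℂ := !![0, -Complex.I; Complex.I, 0]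
def σ₃ : Matrix (Fin 2) (Fin 2) ℂ := !![1, 0; 0, -1]

/-- f(x) = ((1+x)/2)·log₂(1+x) + ((1-x)/2)·log₂(1-x) (with 0·log₂0 = 0, as logb 2 0 = 0). -/
def f (x : ℝ) : ℝ := (1 + x) / 2 * Real.logb 2 (1 + x) + (1 - x) / 2 * Real.logb 2 (1 - x)

/-- von Neumann entropy (base-2) of a Hermitian matrix; junk value 0 otherwise. -/
def entropy {n : Type*} [Fintype n] [DecidableEq n] (M : Matrix n n ℂ) : ℝ :=
  if h : M.IsHermitian then -∑ i, h.eigenvalues i * Real.logb 2 (h.eigenvalues i) else 0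

abbrev Q3 := Fin 2 × Fin 2 × Fin 2

/-- the three-qubit state ρ = (1/8)(1 + ∑ⱼ cⱼ σⱼ⊗σⱼ⊗σⱼ) -/
def rho3 (c₁ c₂ c₃ : ℝ) : Matrix Q3 Q3 ℂ :=
  (8 : ℂ)⁻¹ • (1 + (c₁ : ℂ) • (σ₁ ⊗ₖ (σ₁ ⊗ₖ σ₁)) + (c₂ : ℂ) • (σ₂ ⊗ₖ (σ₂ ⊗ₖ σ₂))
    + (c₃ : ℂ) • (σ₃ ⊗ₖ (σ₃ ⊗ₖ σ₃)))

/-- The traceless part of `8ρ`. -/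
def pauliPart (c₁ c₂ c₃ : ℝ) : Matrix Q3 Q3 ℂ :=
  (c₁ : ℂ) • (σ₁ ⊗ₖ (σ₁ ⊗ₖ σ₁)) + (c₂ : ℂ) • (σ₂ ⊗ₖ (σ₂ ⊗ₖ σ₂))
    + (c₃ : ℂ) • (σ₃ ⊗ₖ (σ₃ ⊗ₖ σ₃))

lemma rho3_eq (c₁ c₂ c₃ : ℝ) :
    rho3 c₁ c₂ c₃ = (8 : ℂ)⁻¹ • (1 + pauliPart c₁ c₂ c₃) := by
  simp only [rho3, pauliPart, add_assoc]

lemma cube_mul_cube_of_sq {A : Matrix (Fin 2) (Fin 2) ℂ} (h : A * A = 1) :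
    (A ⊗ₖ (A ⊗ₖ A)) * (A ⊗ₖ (A ⊗ₖ A)) = 1 := by
  rw [← mul_kronecker_mul, ← mul_kronecker_mul, h, one_kronecker_one, one_kronecker_one]

/-- Threefold tensor powers of anticommuting matrices anticommute, since `3` is odd. -/
lemma cube_anticomm {A B : Matrix (Fin 2) (Fin 2) ℂ} (h : A * B = -(B * A)) :
    (A ⊗ₖ (A ⊗ₖ A)) * (B ⊗ₖ (B ⊗ₖ B)) = -((B ⊗ₖ (B ⊗ₖ B)) * (A ⊗ₖ (A ⊗ₖ A))) := by
  simp only [← mul_kronecker_mul, h]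
  ext ⟨i, j, k⟩ ⟨i', j', k'⟩
  rw [neg_apply]
  simp only [kronecker_apply, neg_apply (B * A)]
  ring

lemma pauliPart_sq (c₁ c₂ c₃ : ℝ) :
    pauliPart c₁ c₂ c₃ * pauliPart c₁ c₂ c₃
      = ((c₁ ^ 2 + c₂ ^ 2 + c₃ ^ 2 : ℝ) : ℂ) • (1 : Matrix Q3 Q3 ℂ) := by
  have h11 := cube_mul_cube_of_sq (A := σ₁) (by simp [σ₁, one_fin_two])
  have h22 := cube_mul_cube_of_sq (A := σ₂) (by simp [σ₂, one_fin_two])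
  have h33 := cube_mul_cube_of_sq (A := σ₃) (by simp [σ₃, one_fin_two])
  have h12 := cube_anticomm (A := σ₁) (B := σ₂) (by simp [σ₁, σ₂])
  have h13 := cube_anticomm (A := σ₁) (B := σ₃) (by simp [σ₁, σ₃])
  have h23 := cube_anticomm (A := σ₂) (B := σ₃) (by simp [σ₂, σ₃])
  simp only [pauliPart, add_mul, mul_add, smul_mul_smul_comm, h11, h22, h33, h12, h13, h23]
  push_cast
  module

lemma pauliPart_trace (c₁ c₂ c₃ : ℝ) : (pauliPart c₁ c₂ c₃).trace = 0 := by
  have h1 : σ₁.trace = 0 := by simp [σ₁, trace_fin_two]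
  have h2 : σ₂.trace = 0 := by simp [σ₂, trace_fin_two]
  have h3 : σ₃.trace = 0 := by simp [σ₃, trace_fin_two]
  simp [pauliPart, trace_kronecker, h1, h2, h3]

lemma rho3_trace (c₁ c₂ c₃ : ℝ) : (rho3 c₁ c₂ c₃).trace = 1 := by
  rw [rho3_eq, trace_smul, trace_add, pauliPart_trace, trace_one]
  simp

lemma rho3_isHermitian (c₁ c₂ c₃ : ℝ) : (rho3 c₁ c₂ c₃).IsHermitian := by
  have h1 : σ₁ᴴ = σ₁ := by ext i j; fin_cases i <;> fin_cases j <;> simp [σ₁]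
  have h2 : σ₂ᴴ = σ₂ := by ext i j; fin_cases i <;> fin_cases j <;> simp [σ₂]
  have h3 : σ₃ᴴ = σ₃ := by ext i j; fin_cases i <;> fin_cases j <;> simp [σ₃]
  simp [IsHermitian, rho3, conjTranspose_kronecker, h1, h2, h3]

/-- Every eigenvalue `λ` of `ρ` satisfies `(8λ - 1)² = ξ²`. -/
lemma rho3_eigenvalue_sq (c₁ c₂ c₃ : ℝ) (h : (rho3 c₁ c₂ c₃).IsHermitian) (i : Q3) :
    (8 * h.eigenvalues i - 1) ^ 2 = c₁ ^ 2 + c₂ ^ 2 + c₃ ^ 2 := by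
  set l := h.eigenvalues i
  set v : Q3 → ℂ := (h.eigenvectorBasis i).ofLp with hv
  have hv0 : v ≠ 0 := by
    intro h0
    exact h.eigenvectorBasis.orthonormal.ne_zero i ((WithLp.ofLp_eq_zero 2).1 h0)
  have hr : rho3 c₁ c₂ c₃ *ᵥ v = (l : ℂ) • v := by
    have := h.mulVec_eigenvectorBasis i
    rw [← hv] at this
    rw [this]
    exact (Complex.coe_smul _ _).symm
  have hp : pauliPart c₁ c₂ c₃ *ᵥ v = (8 * l - 1 : ℂ) • v := by
    have hP : pauliPart c₁ c₂ c₃ = (8 : ℂ) • rho3 c₁ c₂ c₃ - 1 := by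
      rw [rho3_eq, smul_smul]
      simp
    rw [hP, sub_mulVec, smul_mulVec, hr, one_mulVec]
    module
  have hpp := congrArg (· *ᵥ v) (pauliPart_sq c₁ c₂ c₃)
  simp only [← mulVec_mulVec, hp, mulVec_smul, smul_mulVec, one_mulVec, smul_smul] at hpp
  have := smul_left_injective ℂ hv0 hpp
  have h2 : ((8 * l - 1) * (8 * l - 1) : ℝ) = c₁ ^ 2 + c₂ ^ 2 + c₃ ^ 2 := by
    exact_mod_cast this
  rw [← h2]
  ring

/-- If `x` takes only the values `(1 ± s)/8` on a finite set and the deviations `8x - 1` sum to zero,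
then the average of any `g ∘ x` is the mean of the two values of `g`. -/
lemma sum_of_two_valued {ι : Type*} [Fintype ι] (g : ℝ → ℝ) (x : ι → ℝ) (s : ℝ)
    (hx : ∀ i, (8 * x i - 1) ^ 2 = s ^ 2) (hsum : ∑ i, (8 * x i - 1) = 0) :
    ∑ i, g (x i) = Fintype.card ι * ((g ((1 + s) / 8) + g ((1 - s) / 8)) / 2) := by
  set a := g ((1 + s) / 8) with ha
  set b := g ((1 - s) / 8) with hb
  -- The affine interpolation of `g`; for `s = 0` the slope is `0` by the convention `t / 0 = 0`.
  have key : ∀ i, g (x i) = (a + b) / 2 + (a - b) / (2 * s) * (8 * x i - 1) := by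
    intro i
    rcases sq_eq_sq_iff_eq_or_eq_neg.1 (hx i) with h | h
    · have hxi : x i = (1 + s) / 8 := by linarith
      rw [h, hxi, ← ha]
      by_cases hs : s = 0
      · simp [ha, hb, hs]
      · field_simp
        ring
    · have hxi : x i = (1 - s) / 8 := by linarith
      rw [h, hxi, ← hb]
      by_cases hs : s = 0
      · simp [ha, hb, hs]
      · field_simp
        ring
  simp only [key, Finset.sum_add_distrib, ← Finset.mul_sum, hsum]
  simp

/-- Holds for `t = 0` too, because of the convention `0 · log₂ 0 = 0`. -/
lemma mul_logb_div_eight (t : ℝ) :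
    t / 8 * Real.logb 2 (t / 8) = t / 8 * (Real.logb 2 t - 3) := by
  by_cases ht : t = 0
  · simp [ht]
  · have h8 : Real.logb 2 8 = 3 := by
      rw [show (8 : ℝ) = 2 ^ (3 : ℝ) by norm_num]
      exact Real.logb_rpow (by norm_num) (by norm_num)
    rw [Real.logb_div ht (by norm_num), h8]

theorem entropy_rho3 (c₁ c₂ c₃ : ℝ)
    (hξ : Real.sqrt (c₁ ^ 2 + c₂ ^ 2 + c₃ ^ 2) ≤ 1) :
    entropy (rho3 c₁ c₂ c₃) = 3 - f (Real.sqrt (c₁ ^ 2 + c₂ ^ 2 + c₃ ^ 2)) ∧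
    entropy (rho3 c₁ c₂ c₃) =
      -4 * ((1 + Real.sqrt (c₁ ^ 2 + c₂ ^ 2 + c₃ ^ 2)) / 8) *
          Real.logb 2 ((1 + Real.sqrt (c₁ ^ 2 + c₂ ^ 2 + c₃ ^ 2)) / 8)
        - 4 * ((1 - Real.sqrt (c₁ ^ 2 + c₂ ^ 2 + c₃ ^ 2)) / 8) *
          Real.logb 2 ((1 - Real.sqrt (c₁ ^ 2 + c₂ ^ 2 + c₃ ^ 2)) / 8) := by
  have h := rho3_isHermitian c₁ c₂ c₃
  set ξ := Real.sqrt (c₁ ^ 2 + c₂ ^ 2 + c₃ ^ 2) with hdef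
  have hsq : ξ ^ 2 = c₁ ^ 2 + c₂ ^ 2 + c₃ ^ 2 := Real.sq_sqrt (by positivity)
  have htr : ∑ i, h.eigenvalues i = 1 := by
    have := h.trace_eq_sum_eigenvalues
    rw [rho3_trace] at this
    apply Complex.ofReal_injective
    rw [Complex.ofReal_sum, Complex.ofReal_one]
    exact this.symm
  have hsum : ∑ i, (8 * h.eigenvalues i - 1) = 0 := by
    rw [Finset.sum_sub_distrib, ← Finset.mul_sum, htr]
    simp
  have hS := sum_of_two_valued (fun t => t * Real.logb 2 t) h.eigenvalues ξ
    (fun i => by rw [hsq]; exact rho3_eigenvalue_sq c₁ c₂ c₃ h i) hsum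
  have hcard : (Fintype.card Q3 : ℝ) = 8 := by
    simp
  rw [hcard] at hS
  have hE : entropy (rho3 c₁ c₂ c₃) = -∑ i, h.eigenvalues i * Real.logb 2 (h.eigenvalues i) :=
    dif_pos h
  have hplus := mul_logb_div_eight (1 + ξ)
  have hminus := mul_logb_div_eight (1 - ξ)
  rw [hE, hS]
  constructor
  · rw [hplus, hminus, f]
    ring
  · ring
end
end

section
/- Let c₁,c₂,c₃, t, y₁, y₂, y₃ be real numbers with t² + y₁² + y₂² + y₃² = 1, let V = t·1 + i(y₁σ₁ + y₂σ₂ + y₃σ₃), Π₀ = !![1,0;0,0], P = V Π₀ V†, and z₁ = 2(−t y₂ + y₁ y₃), z₂ = 2(t y₁ + y₂ y₃), z₃ = t² − y₁² − y₂² + y₃². For the three-qubit state ρ = (1/8)(1 + ∑_{j=1}^{3} c_j σ_j⊗σ_j⊗σ_j), the projected matrix satisfies (P ⊗ 1 ⊗ 1) ρ (P ⊗ 1 ⊗ 1) = (1/8) P ⊗ (1⊗1 + ∑_{j=1}^{3} c_j z_j σ_j⊗σ_j), and its trace equals 1/2. -/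
open Matrix Complex Kronecker

noncomputable section

/-! The matrix `P` is the rank-one matrix `v v†`, where `v = (t + i y₃, -y₂ + i y₁)` is the first
column of `V`. Hence `P A P = (v† A v) P` for every `A` (`mul_mul_of_rank_one`). The hypothesis says
that `v` is a unit vector, so `P² = P` and `tr P = 1`, and the `zⱼ` are its Bloch coordinates
`v† σⱼ v`, so `P σⱼ P = zⱼ P`. The mixed-product rule for Kronecker products then gives the projected
matrix. For its trace, only the identity term contributes, since the Pauli matrices are traceless:
`(1/8) · 1 · 4 = 1/2`. -/

lemma mul_mul_of_rank_one (v : Fin 2 → ℂ) (A : Matrix (Fin 2) (Fin 2) ℂ) :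
    vecMulVec v (star v) * A * vecMulVec v (star v)
      = (star v ⬝ᵥ (A *ᵥ v)) • vecMulVec v (star v) := by
  rw [Matrix.mul_assoc, mul_vecMulVec, vecMulVec_mul_vecMulVec, vecMulVec_smul]

theorem projected_rho3 (c₁ c₂ c₃ t y₁ y₂ y₃ : ℝ)
    (h : t ^ 2 + y₁ ^ 2 + y₂ ^ 2 + y₃ ^ 2 = 1)
    (V : Matrix (Fin 2) (Fin 2) ℂ)
    (hV : V = (t : ℂ) • (1 : Matrix (Fin 2) (Fin 2) ℂ) +
      Complex.I • ((y₁ : ℂ) • σ₁ + (y₂ : ℂ) • σ₂ + (y₃ : ℂ) • σ₃))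
    (P : Matrix (Fin 2) (Fin 2) ℂ) (hP : P = V * !![1, 0; 0, 0] * Vᴴ)
    (z₁ z₂ z₃ : ℝ)
    (hz₁ : z₁ = 2 * (-t * y₂ + y₁ * y₃))
    (hz₂ : z₂ = 2 * (t * y₁ + y₂ * y₃))
    (hz₃ : z₃ = t ^ 2 - y₁ ^ 2 - y₂ ^ 2 + y₃ ^ 2) :
    (P ⊗ₖ ((1 : Matrix (Fin 2) (Fin 2) ℂ) ⊗ₖ (1 : Matrix (Fin 2) (Fin 2) ℂ))) * rho3 c₁ c₂ c₃ *
        (P ⊗ₖ ((1 : Matrix (Fin 2) (Fin 2) ℂ) ⊗ₖ (1 : Matrix (Fin 2) (Fin 2) ℂ))) =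
      (8 : ℂ)⁻¹ • (P ⊗ₖ (((1 : Matrix (Fin 2) (Fin 2) ℂ) ⊗ₖ (1 : Matrix (Fin 2) (Fin 2) ℂ))
        + ((c₁ * z₁ : ℝ) : ℂ) • (σ₁ ⊗ₖ σ₁) + ((c₂ * z₂ : ℝ) : ℂ) • (σ₂ ⊗ₖ σ₂)
        + ((c₃ * z₃ : ℝ) : ℂ) • (σ₃ ⊗ₖ σ₃))) ∧
    ((P ⊗ₖ ((1 : Matrix (Fin 2) (Fin 2) ℂ) ⊗ₖ (1 : Matrix (Fin 2) (Fin 2) ℂ))) * rho3 c₁ c₂ c₃ *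
        (P ⊗ₖ ((1 : Matrix (Fin 2) (Fin 2) ℂ) ⊗ₖ (1 : Matrix (Fin 2) (Fin 2) ℂ)))).trace
      = (1 / 2 : ℂ) := by
  have hPv : P = vecMulVec ![(t : ℂ) + I * y₃, -y₂ + I * y₁]
      (star ![(t : ℂ) + I * y₃, -y₂ + I * y₁]) := by
    have hV' : V = !![(t : ℂ) + I * y₃, y₂ + I * y₁; -y₂ + I * y₁, t - I * y₃] := by
      rw [hV]
      ext i j
      fin_cases i <;> fin_cases j <;> simp [σ₁, σ₂, σ₃]
      · linear_combination (-y₂ : ℂ) * I_sq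
      · linear_combination (y₂ : ℂ) * I_sq
      · ring
    rw [hP, hV']
    ext i j
    fin_cases i <;> fin_cases j <;>
      simp [Matrix.mul_apply, Fin.sum_univ_two, vecMulVec_apply]
  have hC : (t : ℂ) ^ 2 + y₁ ^ 2 + y₂ ^ 2 + y₃ ^ 2 = 1 := by exact_mod_cast h
  have hPP : P * P = P := by
    have := mul_mul_of_rank_one ![(t : ℂ) + I * y₃, -y₂ + I * y₁] 1
    rw [← hPv, Matrix.mul_one, Matrix.one_mulVec] at this
    rw [this]
    convert one_smul ℂ P
    simp [dotProduct, Fin.sum_univ_two]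
    linear_combination hC - (y₁ ^ 2 + y₃ ^ 2 : ℂ) * I_sq
  have h1 : P * σ₁ * P = (z₁ : ℂ) • P := by
    rw [hPv, mul_mul_of_rank_one, hz₁]
    congr 1
    simp [σ₁, dotProduct, Matrix.mulVec, Fin.sum_univ_two]
    linear_combination (-2 * y₁ * y₃ : ℂ) * I_sq
  have h2 : P * σ₂ * P = (z₂ : ℂ) • P := by
    rw [hPv, mul_mul_of_rank_one, hz₂]
    congr 1
    simp [σ₂, dotProduct, Matrix.mulVec, Fin.sum_univ_two]
    linear_combination (-2 * (t * y₁ + y₂ * y₃) : ℂ) * I_sq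
  have h3 : P * σ₃ * P = (z₃ : ℂ) • P := by
    rw [hPv, mul_mul_of_rank_one, hz₃]
    congr 1
    simp [σ₃, dotProduct, Matrix.mulVec, Fin.sum_univ_two]
    linear_combination (y₁ ^ 2 - y₃ ^ 2 : ℂ) * I_sq
  have htr : P.trace = 1 := by
    rw [hPv, trace_vecMulVec]
    simp [dotProduct, Fin.sum_univ_two]
    linear_combination hC - (y₁ ^ 2 + y₃ ^ 2 : ℂ) * I_sq
  have hmain : (P ⊗ₖ ((1 : Matrix (Fin 2) (Fin 2) ℂ) ⊗ₖ (1 : Matrix (Fin 2) (Fin 2) ℂ))) *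
      rho3 c₁ c₂ c₃ *
        (P ⊗ₖ ((1 : Matrix (Fin 2) (Fin 2) ℂ) ⊗ₖ (1 : Matrix (Fin 2) (Fin 2) ℂ))) =
      (8 : ℂ)⁻¹ • (P ⊗ₖ (((1 : Matrix (Fin 2) (Fin 2) ℂ) ⊗ₖ (1 : Matrix (Fin 2) (Fin 2) ℂ))
        + ((c₁ * z₁ : ℝ) : ℂ) • (σ₁ ⊗ₖ σ₁) + ((c₂ * z₂ : ℝ) : ℂ) • (σ₂ ⊗ₖ σ₂)
        + ((c₃ * z₃ : ℝ) : ℂ) • (σ₃ ⊗ₖ σ₃))) := by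
    simp only [rho3, Matrix.mul_add, Matrix.add_mul, Matrix.mul_smul, Matrix.smul_mul,
      ← Matrix.mul_kronecker_mul, Matrix.mul_one, Matrix.one_mul, hPP, h1, h2, h3,
      Matrix.kronecker_add, Matrix.kronecker_smul, Matrix.smul_kronecker, smul_smul,
      ofReal_mul]
  refine ⟨hmain, ?_⟩
  have t1 : σ₁.trace = 0 := by simp [σ₁, Matrix.trace, Fin.sum_univ_two]
  have t2 : σ₂.trace = 0 := by simp [σ₂, Matrix.trace, Fin.sum_univ_two]
  have t3 : σ₃.trace = 0 := by simp [σ₃, Matrix.trace, Fin.sum_univ_two]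
  rw [hmain]
  simp only [Matrix.trace_smul, Matrix.trace_kronecker, Matrix.trace_add, htr, t1, t2, t3,
    Matrix.trace_one, Fintype.card_fin, smul_eq_mul]
  norm_num
end
end

section
/- Let c₁,c₂,c₃ be real numbers with c = max(|c₁|,|c₂|,|c₃|) ≤ 1. The infimum, over all triples of unit vectors z, l, m in ℝ³, of the quantity 1 − (1/2)·[f(α) + f(β)], where α = √(c₁² z₁² l₁² + c₂² z₂² l₂² + c₃² z₃² l₃²) and β = √(c₁² z₁² m₁² + c₂² z₂² m₂² + c₃² z₃² m₃²), equals 1 − f(c), and it is attained. -/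
/-!
Up to the factor `1 / (2 log 2)`, `f x` is `g (1 + x) + g (1 - x)` with `g t = t log t` convex on
`[0, ∞)`. So `f` is even and convex on `[-1, 1]`, and therefore monotone on `[0, 1]`
(`f_mono`). For unit vectors `z`, `l` each `zᵢ² ≤ 1` and `cᵢ² ≤ c²`, whence
`∑ cᵢ² zᵢ² lᵢ² ≤ c² ∑ lᵢ² = c²` (`sqrt_le_of_unit`): both radii are at most `c`, which gives
the lower bound. It is attained at `z = l = m = eᵢ`, where `i` is an index with `|cᵢ| = c`.
-/

noncomputable section

/-- Since `f` is even and convex and `a` is a convex combination of `b` and `-b`, `f a ≤ f b`. -/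
lemma f_mono {a b : ℝ} (ha : 0 ≤ a) (hab : a ≤ b) (hb : b ≤ 1) : f a ≤ f b := by
  rcases hab.eq_or_lt with rfl | hlt
  · exact le_rfl
  have hb0 : 0 < b := ha.trans_lt hlt
  have hs : 0 ≤ (b + a) / (2 * b) := by positivity
  have ht : 0 ≤ (b - a) / (2 * b) := div_nonneg (by linarith) (by linarith)
  have hst : (b + a) / (2 * b) + (b - a) / (2 * b) = 1 := by field_simp; ring
  have hts : (b - a) / (2 * b) + (b + a) / (2 * b) = 1 := by rw [add_comm, hst]
  have hp : (1 + b) ∈ Set.Ici (0 : ℝ) := Set.mem_Ici.2 (by linarith)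
  have hm : (1 - b) ∈ Set.Ici (0 : ℝ) := Set.mem_Ici.2 (by linarith)
  have h1 := Real.convexOn_mul_log.2 hp hm hs ht hst
  have h2 := Real.convexOn_mul_log.2 hp hm ht hs hts
  simp only [smul_eq_mul] at h1 h2
  have e1 : (b + a) / (2 * b) * (1 + b) + (b - a) / (2 * b) * (1 - b) = 1 + a := by
    field_simp; ring
  have e2 : (b - a) / (2 * b) * (1 + b) + (b + a) / (2 * b) * (1 - b) = 1 - a := by
    field_simp; ring
  rw [e1] at h1
  rw [e2] at h2
  have hf : ∀ x, f x =
      ((1 + x) * Real.log (1 + x) + (1 - x) * Real.log (1 - x)) / (2 * Real.log 2) := by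
    intro x
    have : Real.log 2 ≠ 0 := (Real.log_pos one_lt_two).ne'
    simp only [f, Real.logb]
    field_simp
  have hlog : 0 < Real.log 2 := Real.log_pos one_lt_two
  rw [hf, hf]
  refine div_le_div_of_nonneg_right ?_ (by positivity)
  linear_combination h1 + h2 +
    ((1 + b) * Real.log (1 + b) + (1 - b) * Real.log (1 - b)) * hst

lemma sqrt_le_of_unit {c₁ c₂ c₃ c z₁ z₂ z₃ l₁ l₂ l₃ : ℝ}
    (h₁ : |c₁| ≤ c) (h₂ : |c₂| ≤ c) (h₃ : |c₃| ≤ c)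
    (hz : z₁ ^ 2 + z₂ ^ 2 + z₃ ^ 2 = 1) (hl : l₁ ^ 2 + l₂ ^ 2 + l₃ ^ 2 = 1) :
    Real.sqrt (c₁ ^ 2 * z₁ ^ 2 * l₁ ^ 2 + c₂ ^ 2 * z₂ ^ 2 * l₂ ^ 2 +
      c₃ ^ 2 * z₃ ^ 2 * l₃ ^ 2) ≤ c := by
  refine Real.sqrt_le_iff.2 ⟨(abs_nonneg _).trans h₁, ?_⟩
  have key : ∀ d z l : ℝ, |d| ≤ c → z ^ 2 ≤ 1 → d ^ 2 * z ^ 2 * l ^ 2 ≤ c ^ 2 * l ^ 2 := by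
    intro d z l hd hz'
    have hd2 : d ^ 2 ≤ c ^ 2 := sq_le_sq.2 (hd.trans (le_abs_self c))
    have : d ^ 2 * z ^ 2 ≤ c ^ 2 * 1 := mul_le_mul hd2 hz' (sq_nonneg _) (sq_nonneg _)
    exact mul_le_mul_of_nonneg_right (by linarith) (sq_nonneg _)
  have k1 := key c₁ z₁ l₁ h₁ (by linarith [sq_nonneg z₂, sq_nonneg z₃])
  have k2 := key c₂ z₂ l₂ h₂ (by linarith [sq_nonneg z₁, sq_nonneg z₃])
  have k3 := key c₃ z₃ l₃ h₃ (by linarith [sq_nonneg z₁, sq_nonneg z₂])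
  linear_combination k1 + k2 + k3 + c ^ 2 * hl

theorem conditional_entropy_min (c₁ c₂ c₃ : ℝ) (hc : max |c₁| (max |c₂| |c₃|) ≤ 1) :
    IsLeast
      {y : ℝ | ∃ z₁ z₂ z₃ l₁ l₂ l₃ m₁ m₂ m₃ : ℝ,
        z₁ ^ 2 + z₂ ^ 2 + z₃ ^ 2 = 1 ∧ l₁ ^ 2 + l₂ ^ 2 + l₃ ^ 2 = 1 ∧
        m₁ ^ 2 + m₂ ^ 2 + m₃ ^ 2 = 1 ∧
        y = 1 - (1 / 2) *
          (f (Real.sqrt (c₁ ^ 2 * z₁ ^ 2 * l₁ ^ 2 + c₂ ^ 2 * z₂ ^ 2 * l₂ ^ 2 +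
                c₃ ^ 2 * z₃ ^ 2 * l₃ ^ 2)) +
           f (Real.sqrt (c₁ ^ 2 * z₁ ^ 2 * m₁ ^ 2 + c₂ ^ 2 * z₂ ^ 2 * m₂ ^ 2 +
                c₃ ^ 2 * z₃ ^ 2 * m₃ ^ 2)))}
      (1 - f (max |c₁| (max |c₂| |c₃|))) := by
  constructor
  · have hmax : max |c₁| (max |c₂| |c₃|) = |c₁| ∨ max |c₁| (max |c₂| |c₃|) = |c₂| ∨
        max |c₁| (max |c₂| |c₃|) = |c₃| := by
      rcases max_choice |c₁| (max |c₂| |c₃|) with h | h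
      · exact Or.inl h
      · rw [h]; exact Or.inr (max_choice _ _)
    rcases hmax with h | h | h <;> rw [h]
    · refine ⟨1, 0, 0, 1, 0, 0, 1, 0, 0, by norm_num, by norm_num, by norm_num, ?_⟩
      norm_num [Real.sqrt_sq_eq_abs]
      ring
    · refine ⟨0, 1, 0, 0, 1, 0, 0, 1, 0, by norm_num, by norm_num, by norm_num, ?_⟩
      norm_num [Real.sqrt_sq_eq_abs]
      ring
    · refine ⟨0, 0, 1, 0, 0, 1, 0, 0, 1, by norm_num, by norm_num, by norm_num, ?_⟩
      norm_num [Real.sqrt_sq_eq_abs]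
      ring
  · rintro y ⟨z₁, z₂, z₃, l₁, l₂, l₃, m₁, m₂, m₃, hz, hl, hm, rfl⟩
    have h₁ : |c₁| ≤ max |c₁| (max |c₂| |c₃|) := le_max_left _ _
    have h₂ : |c₂| ≤ max |c₁| (max |c₂| |c₃|) := (le_max_left _ _).trans (le_max_right _ _)
    have h₃ : |c₃| ≤ max |c₁| (max |c₂| |c₃|) := (le_max_right _ _).trans (le_max_right _ _)
    have hα := f_mono (Real.sqrt_nonneg _) (sqrt_le_of_unit h₁ h₂ h₃ hz hl) hc
    have hβ := f_mono (Real.sqrt_nonneg _) (sqrt_le_of_unit h₁ h₂ h₃ hz hm) hc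
    linarith
end
end

section
/- Let 0 ≤ p ≤ 1, Γ₀ = √(1−p/2)·1, Γ₁ = √(p/2)·σ₃, and let ε be the N-qubit phase-flip channel ε(M) = ∑_{k ∈ {0,1}^N} (Γ_{k₁} ⊗ ⋯ ⊗ Γ_{k_N}) M (Γ_{k₁} ⊗ ⋯ ⊗ Γ_{k_N})†. Then for any real c₁,c₂,c₃, the N-qubit state ρ_N = 2^{-N}(1 + ∑_{j=1}^{3} c_j σ_j^{⊗N}) satisfies ε(ρ_N) = 2^{-N}(1 + (1−p)^N c₁ σ₁^{⊗N} + (1−p)^N c₂ σ₂^{⊗N} + c₃ σ₃^{⊗N}). -/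
/-!
The channel is the `N`-th tensor power of the single-qubit phase-flip channel: by the
mixed-product rule (`kron_mul`) and multilinearity (`sum_kron`), it sends `A^{⊗N}` to
`(∑ᵢ Γᵢ A Γᵢ†)^{⊗N}` (`phaseFlip_kron`). The single-qubit channel preserves the diagonal of `A` and
scales its off-diagonal part by `1 - p` (`kraus_sum`), so it fixes `1` and `σ₃` and scales `σ₁`
and `σ₂` by `1 - p`; taking tensor powers gives the factor `(1 - p) ^ N`, and linearity concludes.
-/

open Matrix Complex

noncomputable section

/-- The single-qubit phase-flip Kraus operators Γ₀ = √(1−p/2)·1 and Γ₁ = √(p/2)·σ₃. -/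
def Kraus (p : ℝ) : Fin 2 → Matrix (Fin 2) (Fin 2) ℂ
  | 0 => ((Real.sqrt (1 - p / 2) : ℝ) : ℂ) • (1 : Matrix (Fin 2) (Fin 2) ℂ)
  | 1 => ((Real.sqrt (p / 2) : ℝ) : ℂ) • !![1, 0; 0, -1]

/-- The Kronecker product Γ_{k₁} ⊗ ⋯ ⊗ Γ_{k_N} of phase-flip Kraus operators. -/
def KrausPow (p : ℝ) (N : ℕ) (k : Fin N → Fin 2) :
    Matrix (Fin N → Fin 2) (Fin N → Fin 2) ℂ :=
  Matrix.of fun x y => ∏ t, Kraus p (k t) (x t) (y t)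

/-- The N-qubit phase-flip channel ε(M) = ∑_k (Γ_{k₁}⊗⋯⊗Γ_{k_N}) M (Γ_{k₁}⊗⋯⊗Γ_{k_N})†. -/
def phaseFlip (p : ℝ) (N : ℕ) (M : Matrix (Fin N → Fin 2) (Fin N → Fin 2) ℂ) :
    Matrix (Fin N → Fin 2) (Fin N → Fin 2) ℂ :=
  ∑ k : Fin N → Fin 2, KrausPow p N k * M * (KrausPow p N k)ᴴ

/-- The `N`-fold Kronecker product `A₁ ⊗ ⋯ ⊗ A_N` of `2 × 2` matrices, indexed by
`Fin N → Fin 2`. -/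
def kron {N : ℕ} (A : Fin N → Matrix (Fin 2) (Fin 2) ℂ) :
    Matrix (Fin N → Fin 2) (Fin N → Fin 2) ℂ :=
  Matrix.of fun x y => ∏ t, A t (x t) (y t)

lemma kron_mul {N : ℕ} (A B : Fin N → Matrix (Fin 2) (Fin 2) ℂ) :
    kron A * kron B = kron fun t => A t * B t := by
  ext x y
  simp only [kron, Matrix.mul_apply, Matrix.of_apply, ← Finset.prod_mul_distrib]
  exact (Fintype.prod_sum fun t i => A t (x t) i * B t i (y t)).symm

lemma kron_conjTranspose {N : ℕ} (A : Fin N → Matrix (Fin 2) (Fin 2) ℂ) :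
    (kron A)ᴴ = kron fun t => (A t)ᴴ := by
  ext x y
  simp [kron, Matrix.conjTranspose_apply]

/-- Multilinearity of the Kronecker product, expanding a sum in every factor at once. -/
lemma sum_kron {N : ℕ} (A : Fin 2 → Matrix (Fin 2) (Fin 2) ℂ) :
    ∑ k : Fin N → Fin 2, kron (fun t => A (k t)) = kron fun _ => ∑ i, A i := by
  ext x y
  simp only [kron, Matrix.sum_apply, Matrix.of_apply]
  exact (Fintype.prod_sum fun t i => A i (x t) (y t)).symm

lemma kron_one (N : ℕ) : kron (fun _ : Fin N => (1 : Matrix (Fin 2) (Fin 2) ℂ)) = 1 := by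
  ext x y
  simp only [kron, Matrix.of_apply, Matrix.one_apply, Finset.prod_ite_zero, funext_iff]
  simp

lemma kron_smul (N : ℕ) (a : ℂ) (A : Matrix (Fin 2) (Fin 2) ℂ) :
    kron (fun _ : Fin N => a • A) = a ^ N • kron fun _ : Fin N => A := by
  ext x y
  simp [kron, Finset.prod_mul_distrib]

/-- The `N`-qubit channel is the `N`-th tensor power of the single-qubit one. -/
lemma phaseFlip_kron (p : ℝ) (N : ℕ) (A : Matrix (Fin 2) (Fin 2) ℂ) :
    phaseFlip p N (kron fun _ => A) =
      kron fun _ => ∑ i, Kraus p i * A * (Kraus p i)ᴴ := by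
  rw [← sum_kron]
  refine Finset.sum_congr rfl fun k _ => ?_
  change kron (fun t => Kraus p (k t)) * _ * (kron fun t => Kraus p (k t))ᴴ = _
  rw [kron_conjTranspose, kron_mul, kron_mul]

lemma phaseFlip_add (p : ℝ) (N : ℕ) (A B : Matrix (Fin N → Fin 2) (Fin N → Fin 2) ℂ) :
    phaseFlip p N (A + B) = phaseFlip p N A + phaseFlip p N B := by
  simp [phaseFlip, Matrix.mul_add, Matrix.add_mul, Finset.sum_add_distrib]

lemma phaseFlip_smul (p : ℝ) (N : ℕ) (a : ℂ) (A : Matrix (Fin N → Fin 2) (Fin N → Fin 2) ℂ) :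
    phaseFlip p N (a • A) = a • phaseFlip p N A := by
  simp [phaseFlip, Finset.smul_sum]

/-- The single-qubit channel fixes the diagonal and multiplies the off-diagonal entries by
`(1 - p/2) - p/2 = 1 - p`. -/
lemma kraus_sum {p : ℝ} (hp0 : 0 ≤ p) (hp1 : p ≤ 1) (A : Matrix (Fin 2) (Fin 2) ℂ) :
    ∑ i, Kraus p i * A * (Kraus p i)ᴴ =
      !![A 0 0, (1 - p) * A 0 1; (1 - p) * A 1 0, A 1 1] := by
  have h0 : ((Real.sqrt (1 - p / 2) : ℝ) : ℂ) ^ 2 = 1 - p / 2 := by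
    rw [← Complex.ofReal_pow, Real.sq_sqrt (by linarith)]; push_cast; ring
  have h1 : ((Real.sqrt (p / 2) : ℝ) : ℂ) ^ 2 = p / 2 := by
    rw [← Complex.ofReal_pow, Real.sq_sqrt (by linarith)]; push_cast; ring
  simp only [Fin.sum_univ_two, Kraus]
  -- Keeps `simp` from splitting `√(p / 2)` as `√p / √2`.
  generalize Real.sqrt (1 - p / 2) = a at *
  generalize Real.sqrt (p / 2) = b at *
  ext x y
  simp only [Matrix.add_apply, Matrix.mul_apply, Fin.sum_univ_two, Matrix.conjTranspose_apply,
    Matrix.smul_apply]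
  fin_cases x <;> fin_cases y <;> simp [Matrix.one_apply]
  · linear_combination A 0 0 * (h0 + h1)
  · linear_combination A 0 1 * (h0 - h1)
  · linear_combination A 1 0 * (h0 - h1)
  · linear_combination A 1 1 * (h0 + h1)

theorem phase_flip_rhoN (p : ℝ) (hp0 : 0 ≤ p) (hp1 : p ≤ 1) (N : ℕ) (c₁ c₂ c₃ : ℝ) :
    phaseFlip p N (rhoN N c₁ c₂ c₃) =
      ((2 : ℂ) ^ N)⁻¹ •
        (1 + (((1 - p) ^ N * c₁ : ℝ) : ℂ) • pauliPow N 0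
          + (((1 - p) ^ N * c₂ : ℝ) : ℂ) • pauliPow N 1
          + (c₃ : ℂ) • pauliPow N 2) := by
  have e (j : Fin 3) : pauliPow N j = kron fun _ => σ j := rfl
  have s0 : (!![σ 0 0 0, (1 - p) * σ 0 0 1; (1 - p) * σ 0 1 0, σ 0 1 1] : Matrix _ _ ℂ)
      = ((1 - p : ℝ) : ℂ) • σ 0 := by
    ext x y; fin_cases x <;> fin_cases y <;> simp [σ]
  have s1 : (!![σ 1 0 0, (1 - p) * σ 1 0 1; (1 - p) * σ 1 1 0, σ 1 1 1] : Matrix _ _ ℂ)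
      = ((1 - p : ℝ) : ℂ) • σ 1 := by
    ext x y; fin_cases x <;> fin_cases y <;> simp [σ]
  have s2 : (!![σ 2 0 0, (1 - p) * σ 2 0 1; (1 - p) * σ 2 1 0, σ 2 1 1] : Matrix _ _ ℂ)
      = σ 2 := by
    ext x y; fin_cases x <;> fin_cases y <;> simp [σ]
  have hI : phaseFlip p N 1 = 1 := by
    have h1 : (!![(1 : Matrix (Fin 2) (Fin 2) ℂ) 0 0, (1 - p) * (1 : Matrix (Fin 2) (Fin 2) ℂ) 0 1;
        (1 - p) * (1 : Matrix (Fin 2) (Fin 2) ℂ) 1 0, (1 : Matrix (Fin 2) (Fin 2) ℂ) 1 1] :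
        Matrix _ _ ℂ) = 1 := by
      ext x y; fin_cases x <;> fin_cases y <;> simp
    rw [← kron_one, phaseFlip_kron, kraus_sum hp0 hp1, h1]
  simp only [rhoN, phaseFlip_smul, phaseFlip_add, hI, e, phaseFlip_kron, kraus_sum hp0 hp1,
    s0, s1, s2, kron_smul, smul_smul]
  push_cast
  simp only [mul_comm]
end
end

section
/- Let c₁,c₂,c₃ be real numbers such that at least two of c₁,c₂,c₃ are nonzero and c₁²+c₂²+c₃² ≤ 1. For p ∈ [0,1] define δ(p) = √((1−p)⁶c₁² + (1−p)⁶c₂² + c₃²) and θ(p) = max((1−p)³|c₁|, (1−p)³|c₂|, |c₃|). Then the function D(p) = f(δ(p)) − f(θ(p)), which is the quantum discord of the three-qubit state ρ = (1/8)(1 + ∑ c_j σ_j⊗σ_j⊗σ_j) after each qubit passes through the phase-flip channel with parameter p, is strictly monotonically decreasing on [0,1]; in particular D is never constant on any nondegenerate subinterval of [0,1] (no frozen discord for odd qubit number). -/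
/-!
With the substitution `y = x ^ 2`, the function `h y = f (√y)` is strictly increasing and strictly
convex on `[0, 1]`: its derivative is `(2 log 2)⁻¹ ∑ yᵏ / (2k + 1)`, by the power series of
`log (1 + x) - log (1 - x)` (`hasDerivAt_f_sqrt`, `series_lt`).

Put `u = (1 - p) ^ 6`. Then `D` is the increment of `h` from
`a u = max (u c₁²) (max (u c₂²) c₃²)` to `A u = u c₁² + u c₂² + c₃²`. When `u` grows to `v`, the
interval `[a u, a v]` is no longer than `[A u, A v]` and lies to its left, so the increment of `h`
over the former is the smaller one (`increment_lt`). It is strictly smaller because at least two of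
the `cⱼ` are nonzero: the former interval is then strictly shorter, or else nondegenerate and
strictly to the left (`max_increment`).
-/

noncomputable section

/-- δ(p) = √((1−p)⁶c₁² + (1−p)⁶c₂² + c₃²) -/
def δ (c₁ c₂ c₃ p : ℝ) : ℝ :=
  Real.sqrt ((1 - p) ^ 6 * c₁ ^ 2 + (1 - p) ^ 6 * c₂ ^ 2 + c₃ ^ 2)

/-- θ(p) = max((1−p)³|c₁|, (1−p)³|c₂|, |c₃|) -/
def θ (c₁ c₂ c₃ p : ℝ) : ℝ :=
  max ((1 - p) ^ 3 * |c₁|) (max ((1 - p) ^ 3 * |c₂|) |c₃|)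

/-- The quantum discord of the three-qubit state ρ = (1/8)(1 + ∑ cⱼ σⱼ⊗σⱼ⊗σⱼ) after each
qubit passes through the phase-flip channel with parameter p. -/
def D (c₁ c₂ c₃ p : ℝ) : ℝ := f (δ c₁ c₂ c₃ p) - f (θ c₁ c₂ c₃ p)

/-- `f` through `x ↦ -x log x`, whose continuity and derivative are known. -/
lemma f_eq (x : ℝ) :
    f x = -(Real.negMulLog (1 + x) + Real.negMulLog (1 - x)) / (2 * Real.log 2) := by
  have : Real.log 2 ≠ 0 := (Real.log_pos one_lt_two).ne'
  unfold f Real.negMulLog Real.logb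
  field_simp
  ring

lemma continuous_f : Continuous f := by
  have h : f = fun x => -(Real.negMulLog (1 + x) + Real.negMulLog (1 - x)) / (2 * Real.log 2) :=
    funext f_eq
  rw [h]
  have := Real.continuous_negMulLog
  fun_prop

lemma hasDerivAt_f {x : ℝ} (h0 : 0 < x) (h1 : x < 1) :
    HasDerivAt f ((Real.log (1 + x) - Real.log (1 - x)) / (2 * Real.log 2)) x := by
  have h : f = fun x => -(Real.negMulLog (1 + x) + Real.negMulLog (1 - x)) / (2 * Real.log 2) :=
    funext f_eq
  rw [h]
  have e1 : HasDerivAt (fun x : ℝ => Real.negMulLog (1 + x)) ((-Real.log (1 + x) - 1) * 1) x :=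
    (Real.hasDerivAt_negMulLog (by linarith : 1 + x ≠ 0)).comp x ((hasDerivAt_id x).const_add 1)
  have e2 : HasDerivAt (fun x : ℝ => Real.negMulLog (1 - x)) ((-Real.log (1 - x) - 1) * (-1)) x :=
    (Real.hasDerivAt_negMulLog (by linarith : 1 - x ≠ 0)).comp x ((hasDerivAt_id x).const_sub 1)
  refine ((e1.add e2).neg.div_const (2 * Real.log 2)).congr_deriv ?_
  ring

/-- The power series `∑ yᵏ / (2k + 1)`, which is `artanh √y / √y` for `0 < y < 1`. -/
def artanhSeries (y : ℝ) : ℝ := ∑' k : ℕ, y ^ k / (2 * k + 1)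

lemma summable_artanhSeries {y : ℝ} (h0 : 0 ≤ y) (h1 : y < 1) :
    Summable fun k : ℕ => y ^ k / (2 * k + 1) := by
  refine Summable.of_nonneg_of_le (fun k => by positivity) (fun k => ?_)
    (summable_geometric_of_lt_one h0 h1)
  apply div_le_self (by positivity)
  have : (0 : ℝ) ≤ k := by positivity
  linarith

lemma series_lt {x y : ℝ} (h0 : 0 ≤ x) (hxy : x < y) (h1 : y < 1) :
    artanhSeries x < artanhSeries y := by
  refine Summable.tsum_lt_tsum (i := 1) (fun k => ?_) ?_
    (summable_artanhSeries h0 (hxy.trans h1)) (summable_artanhSeries (h0.trans hxy.le) h1)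
  · gcongr
  · norm_num
    linarith

lemma series_pos {y : ℝ} (h0 : 0 ≤ y) (h1 : y < 1) : 0 < artanhSeries y := by
  refine (summable_artanhSeries h0 h1).tsum_pos (fun k => by positivity) 0 (by norm_num)

lemma series_eq {y : ℝ} (h0 : 0 < y) (h1 : y < 1) :
    Real.log (1 + √y) - Real.log (1 - √y) = 2 * √y * artanhSeries y := by
  have hs : |√y| < 1 := by
    rw [abs_of_nonneg (Real.sqrt_nonneg y), Real.sqrt_lt' one_pos]
    simpa using h1
  have hsum := Real.hasSum_log_sub_log_of_abs_lt_one hs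
  have hsum' := (summable_artanhSeries h0.le h1).hasSum.mul_left (2 * √y)
  refine hsum.unique (hsum'.congr_fun fun k => ?_)
  rw [pow_succ, pow_mul, Real.sq_sqrt h0.le]
  ring

lemma hasDerivAt_f_sqrt {y : ℝ} (h0 : 0 < y) (h1 : y < 1) :
    HasDerivAt (fun y => f (√y)) (artanhSeries y / (2 * Real.log 2)) y := by
  have hs : 0 < √y := Real.sqrt_pos.2 h0
  have hs1 : √y < 1 := by
    rw [Real.sqrt_lt' one_pos]
    simpa using h1
  have hl : Real.log 2 ≠ 0 := (Real.log_pos one_lt_two).ne'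
  refine ((hasDerivAt_f hs hs1).comp y (Real.hasDerivAt_sqrt h0.ne')).congr_deriv ?_
  rw [series_eq h0 h1]
  field_simp

lemma continuousOn_f_sqrt : ContinuousOn (fun y => f (√y)) (Set.Icc 0 1) :=
  (continuous_f.comp Real.continuous_sqrt).continuousOn

lemma strictMonoOn_f_sqrt : StrictMonoOn (fun y => f (√y)) (Set.Icc 0 1) := by
  refine strictMonoOn_of_deriv_pos (convex_Icc 0 1) continuousOn_f_sqrt fun y hy => ?_
  rw [interior_Icc] at hy
  rw [(hasDerivAt_f_sqrt hy.1 hy.2).deriv]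
  have := series_pos hy.1.le hy.2
  have := Real.log_pos one_lt_two
  positivity

lemma strictConvexOn_f_sqrt : StrictConvexOn ℝ (Set.Icc 0 1) (fun y => f (√y)) := by
  refine StrictMonoOn.strictConvexOn_of_deriv (convex_Icc 0 1) continuousOn_f_sqrt ?_
  rw [interior_Icc]
  intro x hx y hy hxy
  rw [(hasDerivAt_f_sqrt hx.1 hx.2).deriv, (hasDerivAt_f_sqrt hy.1 hy.2).deriv]
  have := series_lt hx.1.le hxy hy.2
  have := Real.log_pos one_lt_two
  gcongr

/-- Increments of a strictly convex, strictly increasing function over two intervals: the one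
over `[a, b]` is smaller if `a ≤ A` and `[a, b]` is not longer than `[A, B]`, provided that it is
strictly shorter, or that `a < A` and `[a, b]` is nondegenerate. -/
lemma increment_lt {h : ℝ → ℝ} (hm : StrictMonoOn h (Set.Icc 0 1))
    (hc : StrictConvexOn ℝ (Set.Icc 0 1) h) {a b A B : ℝ} (ha : 0 ≤ a) (hab : a ≤ b)
    (haA : a ≤ A) (hAB : A < B) (hB : B ≤ 1) (hlen : b - a ≤ B - A)
    (hstrict : b - a < B - A ∨ (a < A ∧ a < b)) :
    h b - h a < h B - h A := by
  set C := A + (b - a) with hC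
  have hAm : A ∈ Set.Icc (0 : ℝ) 1 := ⟨by linarith, by linarith⟩
  have ham : a ∈ Set.Icc (0 : ℝ) 1 := ⟨by linarith, by linarith⟩
  have hCm : C ∈ Set.Icc (0 : ℝ) 1 := ⟨by linarith, by linarith⟩
  have hBm : B ∈ Set.Icc (0 : ℝ) 1 := ⟨by linarith, by linarith⟩
  have hCB : h C ≤ h B := hm.monotoneOn hCm hBm (by linarith)
  -- Both `b` and `A` lie strictly between `a` and `C`, with `a + C = b + A`.
  have key : a < A → a < b → h b + h A < h a + h C := by
    intro h1 h2
    have hpos : 0 < C - a := by linarith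
    have w1 : 0 < (b - a) / (C - a) := div_pos (by linarith) hpos
    have w2 : 0 < (A - a) / (C - a) := div_pos (by linarith) hpos
    have hw : (A - a) / (C - a) + (b - a) / (C - a) = 1 := by
      rw [← add_div, div_eq_one_iff_eq hpos.ne']
      linarith
    have hw' : (b - a) / (C - a) + (A - a) / (C - a) = 1 := by linarith
    have i1 := hc.2 ham hCm (by linarith : a ≠ C) w2 w1 hw
    have i2 := hc.2 ham hCm (by linarith : a ≠ C) w1 w2 hw'
    have e1 : (A - a) / (C - a) * a + (b - a) / (C - a) * C = b := by
      field_simp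
      rw [hC]
      ring
    have e2 : (b - a) / (C - a) * a + (A - a) / (C - a) * C = A := by
      field_simp
      rw [hC]
      ring
    simp only [smul_eq_mul] at i1 i2
    rw [e1] at i1
    rw [e2] at i2
    linear_combination i1 + i2 + (h a + h C) * hw
  rcases hstrict with hs | ⟨h1, h2⟩
  · have hCB' : h C < h B := hm hCm hBm (by linarith)
    rcases haA.eq_or_lt with h1 | h1
    · have : C = b := by linarith
      rw [this] at hCB'
      rw [h1]
      linarith
    · rcases hab.eq_or_lt with h2 | h2
      · have := hm hAm hBm hAB
        rw [h2]
        linarith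
      · have := key h1 h2
        linarith
  · have := key h1 h2
    linarith

/-- The comparison of intervals required by `increment_lt`, with `x, y, z` standing for
`c₁², c₂², c₃²`. -/
lemma max_increment {x y z u v : ℝ} (hx : 0 ≤ x) (hy : 0 ≤ y)
    (htwo : (0 < x ∧ 0 < y) ∨ (0 < x ∧ 0 < z) ∨ (0 < y ∧ 0 < z)) (hu : 0 ≤ u) (huv : u < v) :
    max (v * x) (max (v * y) z) - max (u * x) (max (u * y) z) <
        (v * x + v * y + z) - (u * x + u * y + z) ∨
      (max (v * x) (max (v * y) z) - max (u * x) (max (u * y) z) ≤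
        (v * x + v * y + z) - (u * x + u * y + z) ∧
      max (u * x) (max (u * y) z) < u * x + u * y + z ∧
      max (u * x) (max (u * y) z) < max (v * x) (max (v * y) z)) := by
  have hxy : 0 < x + y := by rcases htwo with h | h | h <;> linarith [h.1, h.2]
  have hlen : 0 < (v - u) * (x + y) := mul_pos (by linarith) hxy
  have hvx : 0 ≤ (v - u) * x := mul_nonneg (by linarith) hx
  have hvy : 0 ≤ (v - u) * y := mul_nonneg (by linarith) hy
  have hux := mul_nonneg hu hx
  have huy := mul_nonneg hu hy
  set a := max (u * x) (max (u * y) z) with ha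
  set b := max (v * x) (max (v * y) z) with hb
  have a1 : u * x ≤ a := le_max_left _ _
  have a2 : u * y ≤ a := (le_max_left _ _).trans (le_max_right _ _)
  have a3 : z ≤ a := (le_max_right _ _).trans (le_max_right _ _)
  have hbcases : b = v * x ∨ b = v * y ∨ b = z := by grind
  by_contra! hcon
  obtain ⟨hge, hcon⟩ := hcon
  have hle : b - a ≤ (v * x + v * y + z) - (u * x + u * y + z) := by
    rcases hbcases with h | h | h <;> rw [h] <;> linarith
  have hab : a < b := by linarith
  -- Equality of the lengths forces `x = 0` or `y = 0`, hence `z > 0`. It also excludes `u = 0`,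
  -- where `a = z` and the interval `[a, b]` loses a part of length at least `z`.
  have hlt : a < u * x + u * y + z := by
    have hz' : 0 < z := by
      rcases htwo with ⟨h1, h2⟩ | h | h
      · have := mul_pos (sub_pos.2 huv) h1
        have := mul_pos (sub_pos.2 huv) h2
        rcases hbcases with h | h | h <;> rw [h] at hge <;> linarith
      · exact h.2
      · exact h.2
    rcases hu.eq_or_lt with h0 | h0
    · rw [← h0] at hge hvx hvy
      rcases hbcases with h | h | h <;> rw [h] at hge <;> linarith
    · have := mul_pos h0 hxy
      refine max_lt (by linarith) (max_lt (by linarith) (by linarith))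
  linarith [hcon hle hlt]

lemma D_eq {c₁ c₂ c₃ p : ℝ} (hp : p ≤ 1) :
    D c₁ c₂ c₃ p = f (√((1 - p) ^ 6 * c₁ ^ 2 + (1 - p) ^ 6 * c₂ ^ 2 + c₃ ^ 2)) -
      f (√(max ((1 - p) ^ 6 * c₁ ^ 2) (max ((1 - p) ^ 6 * c₂ ^ 2) (c₃ ^ 2)))) := by
  have hs : ∀ c : ℝ, √((1 - p) ^ 6 * c ^ 2) = (1 - p) ^ 3 * |c| := by
    intro c
    have h3 : 0 ≤ (1 - p) ^ 3 := pow_nonneg (by linarith) 3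
    rw [show (1 - p) ^ 6 * c ^ 2 = ((1 - p) ^ 3 * c) ^ 2 by ring, Real.sqrt_sq_eq_abs, abs_mul,
      abs_of_nonneg h3]
  unfold D δ θ
  rw [Real.sqrt_monotone.map_max, Real.sqrt_monotone.map_max, hs, hs, Real.sqrt_sq_eq_abs]

/-- No frozen discord for three qubits: D is strictly decreasing on [0,1], hence never
constant on any nondegenerate subinterval of [0,1]. -/
theorem no_frozen_discord_three_qubits (c₁ c₂ c₃ : ℝ)
    (htwo : (c₁ ≠ 0 ∧ c₂ ≠ 0) ∨ (c₁ ≠ 0 ∧ c₃ ≠ 0) ∨ (c₂ ≠ 0 ∧ c₃ ≠ 0))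
    (hnorm : c₁ ^ 2 + c₂ ^ 2 + c₃ ^ 2 ≤ 1) :
    StrictAntiOn (D c₁ c₂ c₃) (Set.Icc (0 : ℝ) 1) ∧
    ∀ a b : ℝ, a ∈ Set.Icc (0 : ℝ) 1 → b ∈ Set.Icc (0 : ℝ) 1 → a < b →
      D c₁ c₂ c₃ a ≠ D c₁ c₂ c₃ b := by
  have hanti : StrictAntiOn (D c₁ c₂ c₃) (Set.Icc (0 : ℝ) 1) := by
    intro p hp q hq hpq
    rw [D_eq hp.2, D_eq hq.2]
    have hu : 0 ≤ (1 - q) ^ 6 := pow_nonneg (by linarith [hq.2]) 6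
    have huv : (1 - q) ^ 6 < (1 - p) ^ 6 :=
      pow_lt_pow_left₀ (by linarith) (by linarith [hq.2]) (by norm_num)
    have hv1 : (1 - p) ^ 6 ≤ 1 := pow_le_one₀ (by linarith [hp.2]) (by linarith [hp.1])
    generalize (1 - q) ^ 6 = u at *
    generalize (1 - p) ^ 6 = v at *
    have hx := sq_nonneg c₁
    have hy := sq_nonneg c₂
    have hz := sq_nonneg c₃
    have htwo' : (0 < c₁ ^ 2 ∧ 0 < c₂ ^ 2) ∨ (0 < c₁ ^ 2 ∧ 0 < c₃ ^ 2) ∨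
        (0 < c₂ ^ 2 ∧ 0 < c₃ ^ 2) := by
      simpa only [sq_pos_iff] using htwo
    have hinc := max_increment hx hy htwo' hu huv
    generalize c₁ ^ 2 = x at *
    generalize c₂ ^ 2 = y at *
    generalize c₃ ^ 2 = z at *
    have hxy : 0 < x + y := by rcases htwo' with h | h | h <;> linarith [h.1, h.2]
    have hlen : 0 < (v - u) * (x + y) := mul_pos (by linarith) hxy
    have hux := mul_nonneg hu hx
    have huy := mul_nonneg hu hy
    have hvx := mul_le_mul_of_nonneg_right hv1 hx
    have hvy := mul_le_mul_of_nonneg_right hv1 hy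
    have := increment_lt strictMonoOn_f_sqrt strictConvexOn_f_sqrt
      (a := max (u * x) (max (u * y) z)) (b := max (v * x) (max (v * y) z))
      (A := u * x + u * y + z) (B := v * x + v * y + z)
      (le_max_of_le_left hux) (by gcongr)
      (max_le (by linarith) (max_le (by linarith) (by linarith)))
      (by linarith) (by linarith)
      (hinc.elim le_of_lt fun h => h.1) (hinc.imp id fun h => h.2)
    linarith
  exact ⟨hanti, fun a b ha hb hab => (hanti ha hb hab).ne'⟩
end
end
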